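/- There exists a constant C > 0 such that for every real t ≥ 1, ∫_{ℝ⁴} (2 t ‖z‖/(1 + t² ‖z‖²))³ · (2/(1+‖z‖²))⁴ dz ≤ C / t³. -/

import Mathlib

open MeasureTheory

lemma aux_integrable : Integrable (fun z : EuclideanSpace ℝ (Fin 4) =>
    (‖z‖⁻¹) ^ 3 * (2 / (1 + ‖z‖ ^ 2)) ^ 4) := by
  rw [integrable_fun_norm_addHaar volume (f := fun r : ℝ => (r⁻¹) ^ 3 * (2 / (1 + r ^ 2)) ^ 4)]
  have h1 : IntegrableOn (fun x : ℝ => 16 * (1 + x ^ 2)⁻¹) (Set.Ioi 0) :=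
    (integrable_inv_one_add_sq.const_mul 16).integrableOn
  refine Integrable.mono' h1 (Measurable.aestronglyMeasurable (by fun_prop)) ?_
  filter_upwards [ae_restrict_mem measurableSet_Ioi] with x hx
  have hx : 0 < x := hx
  have e : x ^ (Module.finrank ℝ (EuclideanSpace ℝ (Fin 4)) - 1) •
      ((x⁻¹) ^ 3 * (2 / (1 + x ^ 2)) ^ 4) = 16 * ((1 + x ^ 2)⁻¹) ^ 4 := by
    simp only [finrank_euclideanSpace_fin, smul_eq_mul]
    norm_num
    field_simp
    norm_num
  rw [e, Real.norm_of_nonneg (by positivity)]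
  have h2 : (1 + x ^ 2)⁻¹ ≤ 1 := inv_le_one_of_one_le₀ (by nlinarith)
  have h3 : ((1 + x ^ 2)⁻¹) ^ 4 ≤ (1 + x ^ 2)⁻¹ :=
    pow_le_of_le_one (by positivity) h2 (by norm_num)
  linarith

/-- Estimate (out3): there is `C > 0` such that for all `t ≥ 1`,
`∫_{ℝ⁴} (2t‖z‖/(1+t²‖z‖²))³ (2/(1+‖z‖²))⁴ dz ≤ C/t³`. -/
theorem cubic_remainder_estimate :
    ∃ C : ℝ, 0 < C ∧ ∀ t : ℝ, 1 ≤ t →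
      (∫ z : EuclideanSpace ℝ (Fin 4),
        (2 * t * ‖z‖ / (1 + t ^ 2 * ‖z‖ ^ 2)) ^ 3 * (2 / (1 + ‖z‖ ^ 2)) ^ 4)
        ≤ C / t ^ 3 := by
  have hI : 0 ≤ ∫ z : EuclideanSpace ℝ (Fin 4), (‖z‖⁻¹) ^ 3 * (2 / (1 + ‖z‖ ^ 2)) ^ 4 :=
    integral_nonneg fun z => by positivity
  refine ⟨8 * (∫ z : EuclideanSpace ℝ (Fin 4), (‖z‖⁻¹) ^ 3 * (2 / (1 + ‖z‖ ^ 2)) ^ 4) + 1,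
    by positivity, fun t ht => ?_⟩
  have ht0 : 0 < t := by linarith
  have key := integral_mono_of_nonneg (μ := volume)
    (f := fun z : EuclideanSpace ℝ (Fin 4) =>
      (2 * t * ‖z‖ / (1 + t ^ 2 * ‖z‖ ^ 2)) ^ 3 * (2 / (1 + ‖z‖ ^ 2)) ^ 4)
    (Filter.Eventually.of_forall fun z => by dsimp; positivity)
    (aux_integrable.const_mul (8 / t ^ 3))
    (Filter.Eventually.of_forall fun z => by
      have hb : 2 * t * ‖z‖ / (1 + t ^ 2 * ‖z‖ ^ 2) ≤ 2 / t * ‖z‖⁻¹ := by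
        rcases (norm_nonneg z).eq_or_lt with h | h
        · simp [← h]
        · rw [← div_eq_mul_inv, div_div, div_le_div_iff₀ (by positivity) (by positivity)]
          nlinarith
      have h3 := pow_le_pow_left₀ (by positivity) hb 3
      have h4 := mul_le_mul_of_nonneg_right h3
        (show 0 ≤ (2 / (1 + ‖z‖ ^ 2)) ^ 4 by positivity)
      refine h4.trans (le_of_eq ?_)
      dsimp only
      rw [mul_pow, div_pow]
      ring)
  refine key.trans ?_
  rw [integral_const_mul, div_mul_eq_mul_div]
  gcongr
  linarith
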